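/- Let (F|K,P) be a valued function field (F|K a finitely generated field extension of transcendence degree ≥ 1 with a valuation P, not necessarily trivial on K) such that F|K is separable. Then there is a separating transcendence basis of F|K which contains elements x₁,…,x_ρ and y₁,…,y_τ such that v_Px₁,…,v_Px_ρ is a maximal set of elements of v_PF rationally independent modulo v_PK, and y₁P,…,y_τP form a transcendence basis of FP over KP. -/

import Mathlib

/-! Common valuation-theoretic notions, following F.-V. Kuhlmann,
"On local uniformization in arbitrary characteristic I".

A valued field `(F, P)` is modelled by a field `F` together with a
`ValuationSubring F` (the valuation ring `𝓞` of the place `P`). -/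

namespace LocalUnif

variable {F : Type*} [Field F]

/-- `x` lies in the maximal ideal of the valuation subring `O`,
i.e. the residue `xP` is `0` (equivalently `v_P x > 0`, or `x = 0`). -/
def InMax (O : ValuationSubring F) (x : F) : Prop := x = 0 ∨ x⁻¹ ∉ O

/-- `x` is a unit of the valuation subring `O`, i.e. `v_P x = 0`. -/
def IsVUnit (O : ValuationSubring F) (x : F) : Prop := x ≠ 0 ∧ x ∈ O ∧ x⁻¹ ∈ O

/-- The valuation with valuation ring `O` is trivial on the subfield `K`;
equivalently, every nonzero element of `K` is a unit of `O`. -/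
def TrivialOn (O : ValuationSubring F) (K : Subfield F) : Prop :=
  ∀ x ∈ K, x ∈ O ∧ x⁻¹ ∈ O

/-- The residue field of `O` equals (the isomorphic image of) the subfield `K`:
every element of `O` is congruent to an element of `K` modulo the maximal ideal.
(For a place `P` of `F|K` this says that `P` is a rational place, `FP = K`.) -/
def ResidueEq (O : ValuationSubring F) (K : Subfield F) : Prop :=
  ∀ x ∈ O, ∃ c ∈ K, InMax O (x - c)

/-- The residue field of `O` is algebraic over (the image of) `K`; for a place of
`F|K` this says that `P` is zero-dimensional. -/
def ResidueAlgebraic (O : ValuationSubring F) (K : Subfield F) : Prop :=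
  ∀ x ∈ O, ∃ p : Polynomial F, p ≠ 0 ∧ (∀ i, p.coeff i ∈ K) ∧ InMax O (Polynomial.eval x p)

/-- The values `v_P (x i)` are rationally independent modulo `v_P K`:
no nontrivial ℤ-linear combination of the values lies in `ℚ ⊗ v_P K`
(equivalently, in `v_P K`, by clearing denominators). -/
def ValIndepMod (O : ValuationSubring F) (K : Subfield F) {ρ : ℕ} (x : Fin ρ → F) : Prop :=
  (∀ i, x i ≠ 0) ∧
  ∀ e : Fin ρ → ℤ, (∃ c ∈ K, c ≠ 0 ∧ IsVUnit O ((∏ i, x i ^ e i) / c)) → e = 0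

/-- The residues `(y i)P` are algebraically independent over the residue field `KP`:
for every polynomial with coefficients in `𝓞_K = K ∩ O`, at least one of which is
a unit, the value of the polynomial at `y` is a unit (so its residue is nonzero). -/
def ResIndep (O : ValuationSubring F) (K : Subfield F) {τ : ℕ} (y : Fin τ → F) : Prop :=
  (∀ i, y i ∈ O) ∧
  ∀ p : MvPolynomial (Fin τ) F, (∀ m, p.coeff m ∈ K ∧ p.coeff m ∈ O) →
    (∃ m, IsVUnit O (p.coeff m)) → ¬ InMax O (MvPolynomial.eval y p)

/-- `dim_ℚ (ℚ ⊗ (v_P F / v_P K)) = ρ`: there is a maximal set of `ρ` elements of `F`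
whose values are rationally independent modulo `v_P K`. -/
def RatRankEq (O : ValuationSubring F) (K : Subfield F) (ρ : ℕ) : Prop :=
  (∃ x : Fin ρ → F, ValIndepMod O K x) ∧ ∀ x : Fin (ρ + 1) → F, ¬ ValIndepMod O K x

/-- `trdeg (FP | KP) = τ`: there is a maximal set of `τ` elements of `O` whose
residues are algebraically independent over `KP`. -/
def ResTrdegEq (O : ValuationSubring F) (K : Subfield F) (τ : ℕ) : Prop :=
  (∃ y : Fin τ → F, ResIndep O K y) ∧ ∀ y : Fin (τ + 1) → F, ¬ ResIndep O K y

/-- `trdeg (F | K) = d`. -/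
def TrdegEq (K : Subfield F) (d : ℕ) : Prop :=
  ∃ t : Fin d → F, IsTranscendenceBasis ↥K t

/-- `P` is an Abhyankar place of `F|K`:
`trdeg F|K = trdeg FP|K + dim_ℚ (ℚ ⊗ v_P F)`. -/
def IsAbhyankar (O : ValuationSubring F) (K : Subfield F) : Prop :=
  ∃ d ρ τ : ℕ, d = ρ + τ ∧ TrdegEq K d ∧ RatRankEq O K ρ ∧ ResTrdegEq O K τ

/-- The value group of `O` is archimedean ordered (rank at most 1):
for any two positive values `v_P a, v_P b` there is `n` with `n · v_P a ≥ v_P b`. -/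
def RankOne (O : ValuationSubring F) : Prop :=
  ∀ a b : F, a ≠ 0 → InMax O a → b ≠ 0 → InMax O b → ∃ n : ℕ, a ^ n / b ∈ O

/-- The value group of `O` has (rank) at least `r`: there is a chain of `r` positive
values, each infinitely larger than the previous one. -/
def RankAtLeast (O : ValuationSubring F) (r : ℕ) : Prop :=
  ∃ a : Fin r → F, (∀ i, a i ≠ 0 ∧ InMax O (a i)) ∧
    ∀ i j : Fin r, i < j → ∀ n : ℕ, a i ^ n / a j ∉ O

/-- The value group of `O` has rank exactly `r`. -/
def RankEq (O : ValuationSubring F) (r : ℕ) : Prop :=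
  RankAtLeast O r ∧ ¬ RankAtLeast O (r + 1)

/-- The valuation is discrete: its value group is order isomorphic to `ℤ`,
i.e. there is a uniformizer `π` with every value an integer multiple of `v_P π`. -/
def IsDiscrete (O : ValuationSubring F) : Prop :=
  ∃ π : F, π ≠ 0 ∧ InMax O π ∧ ∀ x : F, x ≠ 0 → ∃ n : ℤ, IsVUnit O (x / π ^ n)

/-- `F|K` is an algebraic function field: a finitely generated field extension of
transcendence degree at least 1. -/
def IsFunctionField (K : Subfield F) : Prop :=
  (∃ S : Finset F, IntermediateField.adjoin ↥K (S : Set F) = ⊤) ∧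
  ∃ x : F, Transcendental ↥K x

/-- The data of a weak uniformization of `(𝓛|𝓚, P)` (both subfields of an ambient
valued field `F`, `𝓚 ⊆ 𝓛`) with uniformizing transcendence basis `t` and generators
`η`: there are polynomials `f i` in `n` variables `X₁, …, Xₙ` with coefficients in
`𝓞_𝓚[t₁,…,tₛ]` such that (U1) `X j` does not occur in `f i` for `i < j`,
(U2) `f i (η) = 0`, and (U3) the residue of `det J_f (η)` is nonzero; moreover `t`
is a transcendence basis of `𝓛|𝓚` inside `𝓞_𝓛` and `𝓛 = 𝓚(t, η)`. -/
def UnifData (𝓛 𝓚 : Subfield F) (O : ValuationSubring F) {s n : ℕ}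
    (t : Fin s → F) (η : Fin n → F) : Prop :=
  (∀ i, t i ∈ 𝓛 ∧ t i ∈ O) ∧ (∀ i, η i ∈ 𝓛 ∧ η i ∈ O) ∧
  AlgebraicIndependent ↥𝓚 t ∧
  (∀ z ∈ 𝓛, IsAlgebraic ↥(IntermediateField.adjoin ↥𝓚 (Set.range t)) z) ∧
  Subfield.closure ((𝓚 : Set F) ∪ Set.range t ∪ Set.range η) = 𝓛 ∧
  ∃ f : Fin n → MvPolynomial (Fin n) F,
    (∀ i m, (f i).coeff m ∈
      Subring.closure ((↑(𝓚.toSubring ⊓ O.toSubring) : Set F) ∪ Set.range t)) ∧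
    (∀ i j : Fin n, (i : ℕ) < (j : ℕ) → MvPolynomial.degreeOf j (f i) = 0) ∧
    (∀ i, MvPolynomial.eval η (f i) = 0) ∧
    IsVUnit O (Matrix.det (Matrix.of fun i j : Fin n =>
      MvPolynomial.eval η (MvPolynomial.pderiv j (f i))))

/-- `(𝓛|𝓚, P)` is uniformizable with respect to `ζ₁, …, ζ_m`:
there is a weak uniformization whose generators `η` include all the `ζ k`. -/
def UnifWrt (𝓛 𝓚 : Subfield F) (O : ValuationSubring F) {m : ℕ} (ζ : Fin m → F) : Prop :=
  ∃ (s n : ℕ) (t : Fin s → F) (η : Fin n → F),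
    UnifData 𝓛 𝓚 O t η ∧ ∃ σ : Fin m → Fin n, ∀ k, η (σ k) = ζ k

/-- `(𝓛|𝓚, P)` is uniformizable: uniformizable with respect to every finite
list of elements of `𝓞_𝓛`. -/
def UnifIn (𝓛 𝓚 : Subfield F) (O : ValuationSubring F) : Prop :=
  ∀ (m : ℕ) (ζ : Fin m → F), (∀ k, ζ k ∈ 𝓛 ∧ ζ k ∈ O) → UnifWrt 𝓛 𝓚 O ζ

section Defectless

variable {K L : Type*} [Field K] [Field L]

/-- The values of the `a i` lie in pairwise distinct cosets modulo the value group of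
the ground field along `φ`; thus there are at least `e` distinct cosets. -/
def ValClassIndep (φ : K →+* L) (OL : ValuationSubring L) {e : ℕ} (a : Fin e → L) : Prop :=
  (∀ i, a i ≠ 0) ∧ ∀ i j : Fin e, i ≠ j →
    ¬ ∃ c : K, c ≠ 0 ∧ IsVUnit OL (a i / (a j * φ c))

/-- The ramification index `e = (v_P L : v_P K)` of `OL` over the ground field along `φ`. -/
def RamIdxEq (φ : K →+* L) (OL : ValuationSubring L) (e : ℕ) : Prop :=
  (∃ a : Fin e → L, ValClassIndep φ OL a) ∧ ∀ a : Fin (e + 1) → L, ¬ ValClassIndep φ OL a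

/-- The residues of the `b i` are linearly independent over the residue field of the
ground field along `φ`. -/
def ResLinIndep (φ : K →+* L) (OK : ValuationSubring K) (OL : ValuationSubring L)
    {f : ℕ} (b : Fin f → L) : Prop :=
  (∀ i, b i ∈ OL) ∧ ∀ c : Fin f → K, (∀ i, c i ∈ OK) → (∃ i, ¬ InMax OK (c i)) →
    ¬ InMax OL (∑ i, φ (c i) * b i)

/-- The inertia degree `f = [LP : KP]` of `OL` over `(K, OK)` along `φ`. -/
def InertiaDegEq (φ : K →+* L) (OK : ValuationSubring K) (OL : ValuationSubring L)
    (f : ℕ) : Prop :=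
  (∃ b : Fin f → L, ResLinIndep φ OK OL b) ∧ ∀ b : Fin (f + 1) → L, ¬ ResLinIndep φ OK OL b

end Defectless

/-- `(K, OK)` is a defectless (stable) valued field: for every finite extension `L|K`
(inside a fixed algebraic closure) the fundamental equality
`[L : K] = ∑ᵢ eᵢ fᵢ` holds, the sum running over all extensions of the valuation. -/
def IsDefectless (K : Type*) [Field K] (OK : ValuationSubring K) : Prop :=
  ∀ L : IntermediateField K (AlgebraicClosure K), FiniteDimensional K ↥L →
    ∃ (g : ℕ) (Os : Fin g → ValuationSubring ↥L) (e f : Fin g → ℕ),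
      Function.Injective Os ∧
      (∀ O' : ValuationSubring ↥L, O'.comap (algebraMap K ↥L) = OK ↔ ∃ i, O' = Os i) ∧
      (∀ i, RamIdxEq (algebraMap K ↥L) (Os i) (e i)) ∧
      (∀ i, InertiaDegEq (algebraMap K ↥L) OK (Os i) (f i)) ∧
      Module.finrank K ↥L = ∑ i, e i * f i

/-- The extension `𝓛|𝓚` of subfields of `F` is separable (in the general sense of
MacLane): every finitely generated subextension is separably generated, i.e. admits
a separating transcendence basis. -/
def IsSeparableExt (𝓚 𝓛 : Subfield F) : Prop :=
  ∀ S : Finset F, ↑S ⊆ (𝓛 : Set F) →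
    ∃ (d : ℕ) (u : Fin d → F), (∀ i, u i ∈ 𝓛) ∧ AlgebraicIndependent ↥𝓚 u ∧
      ∀ x ∈ Subfield.closure ((𝓚 : Set F) ∪ ↑S),
        IsSeparable ↥(IntermediateField.adjoin ↥𝓚 (Set.range u)) x

/-- The embedding of a subfield `K`, on which the valuation is trivial, into
the residue field of `O`. -/
noncomputable def resEmb (O : ValuationSubring F) (K : Subfield F) (h : ∀ x ∈ K, x ∈ O) :
    ↥K →+* IsLocalRing.ResidueField ↥O :=
  (IsLocalRing.residue ↥O).comp
    { toFun := fun x => (⟨x.1, h x.1 x.2⟩ : ↥O)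
      map_one' := rfl
      map_mul' := fun _ _ => rfl
      map_zero' := rfl
      map_add' := fun _ _ => rfl }

end LocalUnif

/-!
Elements `x` with rationally independent values modulo `v_P K` and elements `y` with algebraically
independent residues are jointly algebraically independent over `K`, and both properties survive a
perturbation by elements of larger value. It therefore suffices to find a separating transcendence
basis some of whose members are close to a given algebraically independent family.

In characteristic `0` every transcendence basis containing the family will do. In characteristic
`p`, start from a separating transcendence basis `u` and exchange members one at a time. A family
of the right length is a separating transcendence basis if and only if its differentials span
`Ω[F⁄K]`. Since `d(w + a ^ p u_j) = dw + a ^ p du_j`, the member `u_j` can be exchanged for `w`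
(when `dw` has a nonzero `du_j`-coordinate) or for `w + a ^ p u_j` (when it has none), and the
latter is close to `w` when `a` has large value. Such an `a` exists unless the valuation is trivial
on `F`; then there are no values to realize, and `F` is its own residue field, so any members of `u`
may serve as the `y`.
-/

namespace LocalUnif

section Polynomials

variable {R S Γ₀ σ ι : Type*}

theorem exists_mvPolynomial_map_eq [CommSemiring R] [CommSemiring S] (f : R →+* S)
    {p : MvPolynomial σ S} (hp : ∀ m, p.coeff m ∈ Set.range f) :
    ∃ P : MvPolynomial σ R, MvPolynomial.map f P = p := by
  refine (MvPolynomial.mem_range_map_iff_coeffs_subset (f := f)).2 fun c hc ↦ ?_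
  obtain ⟨m, -, rfl⟩ := MvPolynomial.mem_coeffs_iff.1 hc
  exact hp m

theorem eval_sub_eval_mem [CommRing R] (I : Ideal R) {z z' : σ → R} (h : ∀ i, z i - z' i ∈ I)
    (p : MvPolynomial σ R) : MvPolynomial.eval z p - MvPolynomial.eval z' p ∈ I := by
  have hz : Ideal.Quotient.mk I ∘ z = Ideal.Quotient.mk I ∘ z' :=
    funext fun i ↦ Ideal.Quotient.eq.2 (h i)
  rw [← Ideal.Quotient.eq, MvPolynomial.map_eval, MvPolynomial.map_eval, hz]

theorem valuation_eval_le_one [CommRing R] [LinearOrderedCommMonoidWithZero Γ₀]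
    (v : Valuation R Γ₀) {z : σ → R} (hz : ∀ i, v (z i) ≤ 1) {p : MvPolynomial σ R}
    (hp : ∀ m, v (p.coeff m) ≤ 1) : v (MvPolynomial.eval z p) ≤ 1 := by
  rw [MvPolynomial.eval_eq]
  refine v.map_sum_le fun m _ ↦ ?_
  rw [map_mul, map_prod]
  refine mul_le_one' (hp m) (Finset.prod_le_one' fun i _ ↦ ?_)
  rw [map_pow]
  exact pow_le_one₀ zero_le (hz i)

theorem sum_ne_zero_of_valuation_injOn [Ring R] [LinearOrderedCommMonoidWithZero Γ₀]
    (v : Valuation R Γ₀) {s : Finset ι} (hs : s.Nonempty) {f : ι → R}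
    (hf : ∀ i ∈ s, v (f i) ≠ 0) (hinj : Set.InjOn (fun i ↦ v (f i)) s) :
    ∑ i ∈ s, f i ≠ 0 := by
  classical
  obtain ⟨j, hj, hmax⟩ := s.exists_max_image (fun i ↦ v (f i)) hs
  have hsum : v (∑ i ∈ s, f i) = v (f j) := by
    refine v.map_sum_eq_of_lt hj fun i hi ↦ ?_
    obtain ⟨his, hij⟩ := Finset.mem_sdiff.1 hi
    exact (hmax i his).lt_of_ne fun h ↦ hij (Finset.mem_singleton.2 (hinj his hj h))
  intro h
  rw [h, map_zero] at hsum
  exact hf j hj hsum.symm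

end Polynomials

section Valuation

variable {F : Type*} [Field F] {O : ValuationSubring F} {K : Subfield F} {ρ τ : ℕ}

theorem inMax_iff {x : F} : InMax O x ↔ O.valuation x < 1 := by
  rcases eq_or_ne x 0 with rfl | hx
  · simp [InMax]
  · rw [InMax, ← O.valuation_le_one_iff, not_le, map_inv₀,
      one_lt_inv₀ (zero_lt_iff.2 ((map_ne_zero _).2 hx)), or_iff_right hx]

theorem isVUnit_iff {x : F} : IsVUnit O x ↔ O.valuation x = 1 := by
  rcases eq_or_ne x 0 with rfl | hx
  · simp [IsVUnit]
  · rw [IsVUnit, ← O.valuation_le_one_iff, ← O.valuation_le_one_iff, map_inv₀,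
      inv_le_one₀ (zero_lt_iff.2 ((map_ne_zero _).2 hx)), ← le_antisymm_iff, and_iff_right hx]

theorem valIndepMod_iff {x : Fin ρ → F} :
    ValIndepMod O K x ↔ (∀ i, x i ≠ 0) ∧ ∀ e : Fin ρ → ℤ,
      (∃ c ∈ K, c ≠ 0 ∧ ∏ i, O.valuation (x i) ^ e i = O.valuation c) → e = 0 := by
  refine and_congr_right fun _ ↦ forall_congr' fun e ↦ imp_congr_left
    (exists_congr fun c ↦ and_congr_right fun _ ↦ and_congr_right fun hc ↦ ?_)
  rw [isVUnit_iff, map_div₀, div_eq_one_iff_eq ((map_ne_zero _).2 hc), map_prod]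
  simp only [map_zpow₀]

theorem ResIndep.valuation_eval_eq_one {y : Fin τ → F} (hy : ResIndep O K y)
    {p : MvPolynomial (Fin τ) F} (hK : ∀ m, p.coeff m ∈ K)
    (hO : ∀ m, O.valuation (p.coeff m) ≤ 1) (h1 : ∃ m, O.valuation (p.coeff m) = 1) :
    O.valuation (MvPolynomial.eval y p) = 1 := by
  have hle : O.valuation (MvPolynomial.eval y p) ≤ 1 :=
    valuation_eval_le_one _ (fun i ↦ (O.valuation_le_one_iff _).2 (hy.1 i)) hO
  refine hle.antisymm (not_lt.1 (inMax_iff.not.1 ?_))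
  exact hy.2 p (fun m ↦ ⟨hK m, (O.valuation_le_one_iff _).1 (hO m)⟩)
    (h1.imp fun _ ↦ isVUnit_iff.2)

theorem ResIndep.exists_valuation_aeval_eq_coeff {y : Fin τ → F} (hy : ResIndep O K y)
    {q : MvPolynomial (Fin τ) K} (hq : q ≠ 0) :
    ∃ m ∈ q.support, O.valuation (MvPolynomial.aeval y q) = O.valuation ((q.coeff m : K) : F) := by
  obtain ⟨m₀, hm₀, hmax⟩ := q.support.exists_max_image
    (fun m ↦ O.valuation ((q.coeff m : K) : F)) (MvPolynomial.support_nonempty.2 hq)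
  refine ⟨m₀, hm₀, ?_⟩
  set c : K := q.coeff m₀
  have hc : (c : F) ≠ 0 := Subtype.coe_ne_coe.2 (MvPolynomial.mem_support_iff.1 hm₀)
  have hv : O.valuation (c : F) ≠ 0 := (map_ne_zero _).2 hc
  set p := MvPolynomial.C (c : F)⁻¹ * MvPolynomial.map (algebraMap K F) q
  have hcoeff (m) : p.coeff m = (c : F)⁻¹ * ((q.coeff m : K) : F) := by
    rw [MvPolynomial.coeff_C_mul, MvPolynomial.coeff_map]; rfl
  have hp : O.valuation (MvPolynomial.eval y p) = 1 := by
    refine hy.valuation_eval_eq_one (fun m ↦ ?_) (fun m ↦ ?_) ⟨m₀, ?_⟩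
    · rw [hcoeff]
      exact K.mul_mem (K.inv_mem c.2) (q.coeff m).2
    · rw [hcoeff, map_mul, map_inv₀, inv_mul_le_iff₀ (zero_lt_iff.2 hv), mul_one]
      by_cases hm : m ∈ q.support
      · exact hmax m hm
      · simp [MvPolynomial.notMem_support_iff.1 hm]
    · rw [hcoeff, inv_mul_cancel₀ hc, map_one]
  rwa [map_mul, MvPolynomial.eval_C, MvPolynomial.eval_map, ← MvPolynomial.aeval_def, map_mul,
    map_inv₀, inv_mul_eq_one₀ hv, eq_comm] at hp

theorem ResIndep.algebraicIndependent {y : Fin τ → F} (hy : ResIndep O K y) :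
    AlgebraicIndependent K y := by
  refine algebraicIndependent_iff.2 fun q hq ↦ by_contra fun hq0 ↦ ?_
  obtain ⟨m, hm, h⟩ := hy.exists_valuation_aeval_eq_coeff hq0
  rw [hq, map_zero, eq_comm, map_eq_zero, ZeroMemClass.coe_eq_zero] at h
  exact MvPolynomial.mem_support_iff.1 hm h

theorem ResIndep.of_valuation_sub_lt_one {y y' : Fin τ → F} (hy : ResIndep O K y)
    (h : ∀ i, O.valuation (y' i - y i) < 1) : ResIndep O K y' := by
  have hy' (i) : y' i ∈ O := by
    simpa using O.add_mem _ _ ((O.valuation_le_one_iff _).1 (h i).le) (hy.1 i)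
  refine ⟨hy', fun p hp hunit hmax ↦ hy.2 p hp hunit ?_⟩
  obtain ⟨P, rfl⟩ := exists_mvPolynomial_map_eq O.subtype (p := p) fun m ↦ ⟨⟨_, (hp m).2⟩, rfl⟩
  set z : Fin τ → O := fun i ↦ ⟨y i, hy.1 i⟩
  set z' : Fin τ → O := fun i ↦ ⟨y' i, hy' i⟩
  have heval (w : Fin τ → O) : InMax O (MvPolynomial.eval (O.subtype ∘ w)
      (MvPolynomial.map O.subtype P)) ↔ MvPolynomial.eval w P ∈ IsLocalRing.maximalIdeal O := by
    rw [inMax_iff, ← MvPolynomial.map_eval, O.valuation_lt_one_iff]; rfl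
  have hsub : MvPolynomial.eval z' P - MvPolynomial.eval z P ∈ IsLocalRing.maximalIdeal O :=
    eval_sub_eval_mem _ (fun i ↦ (O.valuation_lt_one_iff _).2 (h i)) P
  exact (heval z).2 ((Submodule.sub_mem_iff_right _ ((heval z').1 hmax)).1 hsub)

theorem ValIndepMod.eq_of_valuation_monomial_eq {x : Fin ρ → F} (hx : ValIndepMod O K x)
    {c d : F} (hc : c ∈ K) (hc0 : c ≠ 0) (hd : d ∈ K) (hd0 : d ≠ 0) {m n : Fin ρ →₀ ℕ}
    (h : O.valuation (c * ∏ i, x i ^ m i) = O.valuation (d * ∏ i, x i ^ n i)) : m = n := by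
  rw [valIndepMod_iff] at hx
  have hx0 (i) : O.valuation (x i) ≠ 0 := (map_ne_zero _).2 (hx.1 i)
  have hn : ∏ i, O.valuation (x i) ^ n i ≠ 0 :=
    Finset.prod_ne_zero_iff.2 fun i _ ↦ pow_ne_zero _ (hx0 i)
  have hprod : ∏ i, O.valuation (x i) ^ ((m i : ℤ) - n i) = O.valuation (d / c) := by
    simp only [map_mul, map_prod, map_pow] at h
    simp only [zpow_sub₀ (hx0 _), zpow_natCast, Finset.prod_div_distrib, map_div₀]
    rw [div_eq_div_iff hn ((map_ne_zero _).2 hc0), mul_comm, h]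
  have he := hx.2 _ ⟨d / c, K.div_mem hd hc, div_ne_zero hd0 hc0, hprod⟩
  ext i
  exact_mod_cast sub_eq_zero.1 (congrFun he i)

theorem ValIndepMod.algebraicIndependent_of_valuation_eq {x : Fin ρ → F} (hx : ValIndepMod O K x)
    (A : Subalgebra K F)
    (hA : ∀ a ∈ A, a ≠ 0 → ∃ c ∈ K, c ≠ 0 ∧ O.valuation a = O.valuation c) :
    AlgebraicIndependent A x := by
  refine algebraicIndependent_iff.2 fun p hp ↦ by_contra fun hp0 ↦ ?_
  have hcoeff (m) (hm : m ∈ p.support) : ((p.coeff m : A) : F) ≠ 0 :=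
    Subtype.coe_ne_coe.2 (MvPolynomial.mem_support_iff.1 hm)
  have hsum : ∑ m ∈ p.support, ((p.coeff m : A) : F) * ∏ i, x i ^ m i ≠ 0 := by
    refine sum_ne_zero_of_valuation_injOn O.valuation (MvPolynomial.support_nonempty.2 hp0)
      (fun m hm ↦ (map_ne_zero _).2 (mul_ne_zero (hcoeff m hm)
        (Finset.prod_ne_zero_iff.2 fun i _ ↦ pow_ne_zero _ (hx.1 i)))) fun m hm n hn h ↦ ?_
    obtain ⟨c, hcK, hc0, hc⟩ := hA _ (p.coeff m).2 (hcoeff m hm)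
    obtain ⟨d, hdK, hd0, hd⟩ := hA _ (p.coeff n).2 (hcoeff n hn)
    refine hx.eq_of_valuation_monomial_eq hcK hc0 hdK hd0 ?_
    simpa only [map_mul, hc, hd] using h
  rw [MvPolynomial.aeval_def, MvPolynomial.eval₂_eq'] at hp
  exact hsum hp

theorem algebraicIndependent_sumElim {x : Fin ρ → F} {y : Fin τ → F} (hx : ValIndepMod O K x)
    (hy : ResIndep O K y) : AlgebraicIndependent K (Sum.elim x y) := by
  refine hy.algebraicIndependent.sumElim
    (hx.algebraicIndependent_of_valuation_eq _ fun a ha ha0 ↦ ?_)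
  rw [Algebra.adjoin_range_eq_range_aeval] at ha
  obtain ⟨q, rfl⟩ := ha
  obtain ⟨m, hm, h⟩ := hy.exists_valuation_aeval_eq_coeff (ne_zero_of_map ha0)
  exact ⟨(q.coeff m : K), (q.coeff m).2,
    Subtype.coe_ne_coe.2 (MvPolynomial.mem_support_iff.1 hm), h⟩

theorem ValIndepMod.of_valuation_sub_lt {x x' : Fin ρ → F} (hx : ValIndepMod O K x)
    (h : ∀ i, O.valuation (x' i - x i) < O.valuation (x i)) : ValIndepMod O K x' := by
  have hv (i) : O.valuation (x' i) = O.valuation (x i) := Valuation.map_eq_of_sub_lt _ (h i)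
  rw [valIndepMod_iff] at hx ⊢
  refine ⟨fun i ↦ (map_ne_zero O.valuation).1 ?_, ?_⟩
  · rw [hv]
    exact (map_ne_zero _).2 (hx.1 i)
  · simpa only [hv] using hx.2

theorem valIndepMod_of_isEmpty (x : Fin 0 → F) : ValIndepMod O K x :=
  ⟨fun i ↦ i.elim0, fun _ _ ↦ Subsingleton.elim _ _⟩

theorem resIndep_of_isEmpty (y : Fin 0 → F) : ResIndep O K y := by
  refine ⟨fun i ↦ i.elim0, fun p _ ⟨m, hm⟩ ↦ ?_⟩
  obtain rfl : m = 0 := Subsingleton.elim _ _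
  rw [MvPolynomial.eq_C_of_isEmpty p, MvPolynomial.eval_C, inMax_iff, isVUnit_iff.1 hm]
  exact lt_irrefl 1

theorem ValIndepMod.algebraicIndependent {x : Fin ρ → F} (hx : ValIndepMod O K x) :
    AlgebraicIndependent K x := by
  have h := (algebraicIndependent_sumElim hx
    (resIndep_of_isEmpty (Fin.elim0 : Fin 0 → F))).comp Sum.inl Sum.inl_injective
  rwa [Sum.elim_comp_inl] at h

theorem ValIndepMod.eq_zero_of_top {x : Fin ρ → F} (hx : ValIndepMod ⊤ K x) : ρ = 0 := by
  have hunit : IsVUnit ⊤ ((∏ i, x i ^ (1 : Fin ρ → ℤ) i) / 1) :=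
    ⟨by simpa [Finset.prod_eq_zero_iff] using hx.1, trivial, trivial⟩
  have h := hx.2 1 ⟨1, K.one_mem, one_ne_zero, hunit⟩
  by_contra hρ
  exact one_ne_zero (congrFun h ⟨0, Nat.pos_of_ne_zero hρ⟩)

theorem resIndep_top_of_algebraicIndependent {y : Fin τ → F} (hy : AlgebraicIndependent K y) :
    ResIndep ⊤ K y := by
  refine ⟨fun _ ↦ trivial, fun p hp ⟨m, hm⟩ hmax ↦ ?_⟩
  obtain ⟨P, rfl⟩ := exists_mvPolynomial_map_eq K.subtype (p := p) fun m ↦ ⟨⟨_, (hp m).1⟩, rfl⟩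
  have hP : MvPolynomial.aeval y P = 0 := by
    rw [MvPolynomial.eval_map] at hmax
    exact hmax.resolve_right fun h ↦ h trivial
  rw [algebraicIndependent_iff.1 hy P hP, map_zero, MvPolynomial.coeff_zero] at hm
  exact hm.1 rfl

end Valuation

section Differentials

open KaehlerDifferential

theorem span_range_update_eq_top {k V ι : Type*} [DivisionRing k] [AddCommGroup V] [Module k V]
    [DecidableEq ι] {e : ι → V} (he : Submodule.span k (Set.range e) = ⊤) {j : ι} {c : k}
    (hc : c ≠ 0) {m : V} (hm : m ∈ Submodule.span k (e '' {j}ᶜ)) :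
    Submodule.span k (Set.range (Function.update e j (c • e j + m))) = ⊤ := by
  set N := Submodule.span k (Set.range (Function.update e j (c • e j + m)))
  have hne (i) (hi : i ≠ j) : e i ∈ N := Submodule.subset_span ⟨i, Function.update_of_ne hi _ _⟩
  have hmN : m ∈ N := Submodule.span_le.2 (Set.image_subset_iff.2 hne) hm
  have hj : e j ∈ N := (N.smul_mem_iff hc).1 <| (N.add_mem_iff_left hmN).1 <|
    Submodule.subset_span ⟨j, Function.update_self _ _ _⟩
  rw [eq_top_iff, ← he, Submodule.span_le]
  rintro _ ⟨i, rfl⟩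
  by_cases hi : i = j
  · exact hi ▸ hj
  · exact hne i hi

theorem span_range_update_eq_top_or {k V ι : Type*} [DivisionRing k] [AddCommGroup V] [Module k V]
    [DecidableEq ι] {e : ι → V} (he : Submodule.span k (Set.range e) = ⊤) (j : ι) (v : V) {c : k}
    (hc : c ≠ 0) :
    Submodule.span k (Set.range (Function.update e j v)) = ⊤ ∨
      Submodule.span k (Set.range (Function.update e j (v + c • e j))) = ⊤ := by
  have hv : v ∈ Submodule.span k (insert (e j) (e '' {j}ᶜ)) := by
    rw [← Set.image_insert_eq, Set.insert_eq, Set.union_compl_self, Set.image_univ, he]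
    exact Submodule.mem_top
  obtain ⟨a, m, hm, rfl⟩ := Submodule.mem_span_insert.1 hv
  rcases eq_or_ne a 0 with rfl | ha
  · right
    rw [zero_smul, zero_add, add_comm]
    exact span_range_update_eq_top he hc hm
  · exact Or.inl (span_range_update_eq_top he ha hm)

variable {K F : Type*} [Field K] [Field F] [Algebra K F]

theorem span_D_image_adjoin (S : Set F) :
    Submodule.span F (D K F '' IntermediateField.adjoin K S) = Submodule.span F (D K F '' S) := by
  refine le_antisymm (Submodule.span_le.2 ?_)
    (Submodule.span_mono (Set.image_mono (IntermediateField.subset_adjoin K S)))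
  rintro _ ⟨x, hx, rfl⟩
  rw [SetLike.mem_coe]
  induction hx using IntermediateField.adjoin_induction with
  | mem x hx => exact Submodule.subset_span ⟨x, hx, rfl⟩
  | algebraMap x => rw [Derivation.map_algebraMap]; exact zero_mem _
  | add x y _ _ hx hy => rw [map_add]; exact add_mem hx hy
  | inv x _ hx => rw [Derivation.leibniz_inv]; exact Submodule.smul_mem _ _ hx
  | mul x y _ _ hx hy =>
    rw [Derivation.leibniz]
    exact add_mem (Submodule.smul_mem _ _ hy) (Submodule.smul_mem _ _ hx)

theorem ker_map_eq_span_D_image (L : IntermediateField K F) :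
    LinearMap.ker (KaehlerDifferential.map K L F F) = Submodule.span F (D K F '' L) := by
  apply le_antisymm
  · rw [← range_mapBaseChange]
    rintro _ ⟨t, rfl⟩
    induction t with
    | zero => rw [map_zero]; exact zero_mem _
    | add s t hs ht => rw [map_add]; exact add_mem hs ht
    | tmul a ω =>
      rw [mapBaseChange_tmul]
      refine Submodule.smul_mem _ _ ?_
      have hω : ω ∈ Submodule.span L (Set.range (D K L)) := by
        rw [span_range_derivation]
        exact Submodule.mem_top
      induction hω using Submodule.span_induction with
      | mem ω h =>
        obtain ⟨l, rfl⟩ := h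
        rw [map_D]
        exact Submodule.subset_span ⟨l, l.2, rfl⟩
      | zero => rw [map_zero]; exact zero_mem _
      | add ω η _ _ hω hη => rw [map_add]; exact add_mem hω hη
      | smul l ω _ hω =>
        rw [map_smul, ← algebraMap_smul F]
        exact Submodule.smul_mem _ _ hω
  · rw [Submodule.span_le]
    rintro _ ⟨l, hl, rfl⟩
    exact (map_D K L F F l).trans ((D L F).map_algebraMap ⟨l, hl⟩)

theorem formallyUnramified_adjoin_iff (S : Set F) :
    Algebra.FormallyUnramified (IntermediateField.adjoin K S) F ↔
      Submodule.span F (D K F '' S) = ⊤ := by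
  rw [← span_D_image_adjoin, ← ker_map_eq_span_D_image, Algebra.formallyUnramified_iff]
  refine ⟨fun h ↦ eq_top_iff.2 fun ω _ ↦ Subsingleton.elim _ _, fun h ↦ ?_⟩
  refine subsingleton_of_forall_eq 0 fun η ↦ ?_
  obtain ⟨ω, rfl⟩ := map_surjective K (IntermediateField.adjoin K S) F η
  exact LinearMap.mem_ker.1 (h ▸ Submodule.mem_top)

theorem isSeparable_of_formallyUnramified (L E F : Type*) [Field L] [Field E] [Field F]
    [Algebra L E] [Algebra L F] [Algebra E F] [IsScalarTower L E F] [Algebra.EssFiniteType L E]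
    [Algebra.IsSeparable E F] [Algebra.FormallyUnramified L F] : Algebra.IsSeparable L F := by
  have : Algebra.FormallyEtale E F := Algebra.FormallyEtale.of_isSeparable E F
  have : Subsingleton (TensorProduct E F Ω[E⁄L]) :=
    (tensorKaehlerEquivOfFormallyEtale L E F).toEquiv.subsingleton
  have : Algebra.FormallyUnramified L E :=
    ⟨Module.FaithfullyFlat.lTensor_reflects_triviality E F Ω[E⁄L]⟩
  have : Algebra.IsSeparable L E := Algebra.FormallyUnramified.isSeparable L E
  exact Algebra.IsSeparable.trans L E F

end Differentials

section TranscendenceBases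

open KaehlerDifferential

variable {K F ι κ : Type*} [Field K] [Field F] [Algebra K F]

theorem exists_isTranscendenceBasis_extension {u : ι → F}
    (hu : IsTranscendenceBasis K u) {w : κ → F} (hw : AlgebraicIndependent K w) :
    ∃ u' : ι → F, IsTranscendenceBasis K u' ∧ ∃ g : κ ↪ ι, u' ∘ g = w := by
  obtain ⟨t, ht, hb⟩ := exists_isTranscendenceBasis_superset
    ((algebraicIndependent_subtype_range hw.injective).2 hw)
  obtain ⟨e⟩ : Nonempty (ι ≃ t) := Cardinal.lift_mk_eq'.1 (hu.lift_cardinalMk_eq hb)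
  refine ⟨fun i ↦ e i, hb.comp_equiv e, ⟨fun k ↦ e.symm ⟨w k, ht ⟨k, rfl⟩⟩, fun k l h ↦ ?_⟩, ?_⟩
  · exact hw.injective (Subtype.ext_iff.1 (e.symm.injective h))
  · funext k
    exact congrArg Subtype.val (e.apply_symm_apply _)

theorem isSeparable_of_le {L E : IntermediateField K F} [Algebra.IsSeparable L F] (h : L ≤ E) :
    Algebra.IsSeparable E F := by
  let := (IntermediateField.inclusion h).toAlgebra
  have : IsScalarTower L E F := .of_algebraMap_eq fun _ ↦ rfl
  exact Algebra.isSeparable_tower_top_of_isSeparable L E F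

/-- A separating transcendence basis of `F|K`: an algebraically independent family `u` such that
`F|K(u)` is separable algebraic. It is an indexed family rather than a set, so that single members
can be exchanged by `Function.update`. -/
structure IsSeparatingTranscendenceBasis (K : Type*) {F : Type*} [Field K] [Field F] [Algebra K F]
    (u : ι → F) : Prop where
  algebraicIndependent : AlgebraicIndependent K u
  isSeparable : Algebra.IsSeparable (IntermediateField.adjoin K (Set.range u)) F

namespace IsSeparatingTranscendenceBasis

variable {u : ι → F}

theorem isTranscendenceBasis (hu : IsSeparatingTranscendenceBasis K u) :
    IsTranscendenceBasis K u := by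
  have := hu.isSeparable
  rw [hu.algebraicIndependent.isTranscendenceBasis_iff_isAlgebraic,
    ← IntermediateField.isAlgebraic_adjoin_iff_top]
  infer_instance

theorem of_charZero [CharZero F] (hu : IsTranscendenceBasis K u) :
    IsSeparatingTranscendenceBasis K u := by
  have : CharZero (IntermediateField.adjoin K (Set.range u)) :=
    (algebraMap _ F).charZero
  have := hu.isAlgebraic_field
  exact ⟨hu.1, inferInstance⟩

theorem span_D_eq_top (hu : IsSeparatingTranscendenceBasis K u) :
    Submodule.span F (Set.range (D K F ∘ u)) = ⊤ := by
  have := hu.isSeparable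
  rw [Set.range_comp, ← formallyUnramified_adjoin_iff]
  exact Algebra.FormallyUnramified.of_isSeparable _ F

theorem of_span_D_eq_top [Finite ι] (hu : IsSeparatingTranscendenceBasis K u) {u' : ι → F}
    (hspan : Submodule.span F (Set.range (D K F ∘ u')) = ⊤) :
    IsSeparatingTranscendenceBasis K u' := by
  set L := IntermediateField.adjoin K (Set.range u')
  set E := IntermediateField.adjoin L (Set.range u)
  have : Algebra.FormallyUnramified L F := by
    rwa [formallyUnramified_adjoin_iff, ← Set.range_comp]
  have : Algebra.EssFiniteType L E := IntermediateField.essFiniteType_iff.2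
    (IntermediateField.fg_adjoin_of_finite (Set.finite_range u))
  have : Algebra.IsSeparable E F := by
    have := hu.isSeparable
    exact isSeparable_of_le (E := E.restrictScalars K) <|
      IntermediateField.adjoin_le_iff.2 (IntermediateField.subset_adjoin L _)
  have hsep : Algebra.IsSeparable L F := isSeparable_of_formallyUnramified L E F
  have : Algebra.IsAlgebraic (Algebra.adjoin K (Set.range u')) F := by
    rw [← IntermediateField.isAlgebraic_adjoin_iff_top]
    infer_instance
  exact ⟨(Algebra.IsAlgebraic.isTranscendenceBasis_of_lift_le_trdeg_of_finite K u'
    hu.isTranscendenceBasis.lift_cardinalMk_eq_trdeg.le).1, hsep⟩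

theorem update_or_update [Finite ι] [DecidableEq ι] (hu : IsSeparatingTranscendenceBasis K u)
    (p : ℕ) [CharP F p] (j : ι) (w : F) {a : F} (ha : a ≠ 0) :
    IsSeparatingTranscendenceBasis K (Function.update u j w) ∨
      IsSeparatingTranscendenceBasis K (Function.update u j (w + a ^ p * u j)) := by
  have hD : D K F (w + a ^ p * u j) = D K F w + a ^ p • D K F (u j) := by
    have hDa : D K F (a ^ p) = 0 := by
      rw [Derivation.leibniz_pow, ← Nat.cast_smul_eq_nsmul F, CharP.cast_eq_zero, zero_smul]
    rw [map_add, Derivation.leibniz, hDa, smul_zero, add_zero]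
  refine (span_range_update_eq_top_or hu.span_D_eq_top j (D K F w) (pow_ne_zero p ha)).imp
    (fun h ↦ hu.of_span_D_eq_top ?_) (fun h ↦ hu.of_span_D_eq_top ?_)
  · rwa [Function.comp_update]
  · rwa [Function.comp_update, hD]

end IsSeparatingTranscendenceBasis

end TranscendenceBases

section Approximation

variable {K F ι κ Γ₀ : Type*} [Field K] [Field F] [Algebra K F]
  [LinearOrderedCommGroupWithZero Γ₀] (v : Valuation F Γ₀) [v.IsNontrivial]

theorem exists_valuation_pow_mul_lt {n : ℕ} (hn : n ≠ 0) (t : F) {c : F} (hc : c ≠ 0) :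
    ∃ a : F, a ≠ 0 ∧ v (a ^ n * t) < v c := by
  have hcv : 0 < v c := zero_lt_iff.2 ((map_ne_zero v).2 hc)
  rcases eq_or_ne t 0 with rfl | ht
  · exact ⟨1, one_ne_zero, by simpa using hcv⟩
  have htv : 0 < v t := zero_lt_iff.2 ((map_ne_zero v).2 ht)
  have hct : c / t ≠ 0 := div_ne_zero hc ht
  obtain ⟨b, hb0, hb⟩ := Valuation.IsNontrivial.exists_lt_one (v := v)
  obtain ⟨a, ha0, ha1, ha⟩ : ∃ a : F, a ≠ 0 ∧ v a ≤ 1 ∧ v a < v (c / t) := by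
    rcases le_total 1 (v (c / t)) with h | h
    · exact ⟨b, hb0, hb.le, hb.trans_le h⟩
    · have hlt : v (b * (c / t)) < v (c / t) := by
        rw [map_mul]
        exact mul_lt_of_lt_one_left (zero_lt_iff.2 ((map_ne_zero v).2 hct)) hb
      exact ⟨b * (c / t), mul_ne_zero hb0 hct, hlt.le.trans h, hlt⟩
  refine ⟨a, ha0, ?_⟩
  rw [map_div₀, lt_div_iff₀ htv] at ha
  rw [map_mul, map_pow]
  exact (mul_le_mul_left (pow_le_of_le_one zero_le ha1 hn) _).trans_lt ha

namespace IsSeparatingTranscendenceBasis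

theorem exists_update_approx [Finite ι] [DecidableEq ι] {u : ι → F}
    (hu : IsSeparatingTranscendenceBasis K u) (p : ℕ) [CharP F p] [NeZero p] (j : ι) (w : F) {c : F}
    (hc : c ≠ 0) :
    ∃ z, IsSeparatingTranscendenceBasis K (Function.update u j z) ∧ v (z - w) < v c := by
  obtain ⟨a, ha, hlt⟩ := exists_valuation_pow_mul_lt v (NeZero.ne p) (u j) hc
  rcases hu.update_or_update p j w ha with h | h
  · refine ⟨_, h, ?_⟩
    rw [sub_self, map_zero]
    exact zero_lt_iff.2 ((map_ne_zero v).2 hc)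
  · refine ⟨_, h, ?_⟩
    rwa [add_sub_cancel_left]

theorem exists_approx_along [Finite ι] {u : ι → F}
    (hu : IsSeparatingTranscendenceBasis K u) (p : ℕ) [CharP F p] [NeZero p] (g : κ ↪ ι) (w : κ → F)
    {c : κ → F} (hc : ∀ k, c k ≠ 0) :
    ∃ u' : ι → F, IsSeparatingTranscendenceBasis K u' ∧ ∀ k, v (u' (g k) - w k) < v (c k) := by
  classical
  have : Finite κ := Finite.of_injective g g.injective
  have := Fintype.ofFinite κ
  suffices h : ∀ s : Finset κ, ∃ u' : ι → F, IsSeparatingTranscendenceBasis K u' ∧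
      ∀ k ∈ s, v (u' (g k) - w k) < v (c k) by
    simpa using h Finset.univ
  intro s
  induction s using Finset.induction_on with
  | empty => exact ⟨u, hu, by simp⟩
  | insert j s _ ih =>
    obtain ⟨u', hu', hs⟩ := ih
    obtain ⟨z, hz, hzj⟩ := hu'.exists_update_approx v p (g j) (w j) (hc j)
    refine ⟨_, hz, fun k hk ↦ ?_⟩
    rcases eq_or_ne k j with rfl | hkj
    · rwa [Function.update_self]
    · rw [Function.update_of_ne (g.injective.ne hkj)]
      exact hs k (Finset.mem_of_mem_insert_of_ne hk hkj)

theorem exists_approx [Finite ι] {u : ι → F} (hu : IsSeparatingTranscendenceBasis K u)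
    {w : κ → F} (hw : AlgebraicIndependent K w) {c : κ → F} (hc : ∀ k, c k ≠ 0) :
    ∃ u' : ι → F, IsSeparatingTranscendenceBasis K u' ∧
      ∃ g : κ ↪ ι, ∀ k, v (u' (g k) - w k) < v (c k) := by
  obtain ⟨u₀, hu₀, g, hg⟩ := exists_isTranscendenceBasis_extension hu.isTranscendenceBasis hw
  obtain ⟨p, hp⟩ := CharP.exists F
  rcases eq_or_ne p 0 with rfl | hp0
  · have : CharZero F := CharP.charP_to_charZero F
    refine ⟨u₀, of_charZero hu₀, g, fun k ↦ ?_⟩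
    rw [← hg, Function.comp_apply, sub_self, map_zero]
    exact zero_lt_iff.2 ((map_ne_zero v).2 (hc k))
  · have : NeZero p := ⟨hp0⟩
    obtain ⟨u', hu', h⟩ := hu.exists_approx_along v p g w hc
    exact ⟨u', hu', g, h⟩

end IsSeparatingTranscendenceBasis

end Approximation

section ValuedFunctionField

variable {F : Type*} [Field F] {K : Subfield F} {O : ValuationSubring F} {d ρ τ : ℕ}
  {u : Fin d → F}

theorem IsSeparatingTranscendenceBasis.exists_valIndepMod_resIndep
    (hu : IsSeparatingTranscendenceBasis K u) {x : Fin ρ → F} {y : Fin τ → F}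
    (hx : ValIndepMod O K x) (hy : ResIndep O K y) :
    ∃ u' : Fin d → F, IsSeparatingTranscendenceBasis K u' ∧ ∃ g : Fin ρ ⊕ Fin τ ↪ Fin d,
      ValIndepMod O K (u' ∘ g ∘ Sum.inl) ∧ ResIndep O K (u' ∘ g ∘ Sum.inr) := by
  have hxy := algebraicIndependent_sumElim hx hy
  by_cases hO : O = ⊤
  · subst hO
    obtain rfl := hx.eq_zero_of_top
    obtain ⟨-, -, g, -⟩ := exists_isTranscendenceBasis_extension hu.isTranscendenceBasis hxy
    exact ⟨u, hu, g, valIndepMod_of_isEmpty _, resIndep_top_of_algebraicIndependent <|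
      hu.algebraicIndependent.comp _ (g.injective.comp Sum.inr_injective)⟩
  · have : O.valuation.IsNontrivial := by
      rwa [ValuationSubring.eq_top_iff, not_not] at hO
    have hc (k) : Sum.elim x (1 : Fin τ → F) k ≠ 0 := by
      rcases k with i | _
      exacts [hx.1 i, one_ne_zero]
    obtain ⟨u', hu', g, h⟩ := hu.exists_approx O.valuation hxy hc
    refine ⟨u', hu', g, hx.of_valuation_sub_lt fun i ↦ h (Sum.inl i),
      hy.of_valuation_sub_lt_one fun j ↦ ?_⟩
    rw [← map_one O.valuation]
    exact h (Sum.inr j)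

theorem card_le_toNat_trdeg {k E : Type*} [Field k] [Field E] [Algebra k E] [FinTrdeg k E] {n : ℕ}
    {w : Fin n → E} (hw : AlgebraicIndependent k w) : n ≤ (Algebra.trdeg k E).toNat := by
  simpa using Cardinal.toNat_le_toNat hw.lift_cardinalMk_le_trdeg
    (Cardinal.lift_lt_aleph0.2 (trdeg_lt_aleph0 k E))

theorem exists_ratRankEq [FinTrdeg K F] (O : ValuationSubring F) : ∃ ρ, RatRankEq O K ρ := by
  obtain ⟨ρ, hρ, hmax⟩ := Nat.exists_not_and_succ_of_not_zero_of_exists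
    (p := fun n ↦ ¬ ∃ x : Fin n → F, ValIndepMod O K x)
    (not_not.2 ⟨Fin.elim0, valIndepMod_of_isEmpty _⟩)
    ⟨(Algebra.trdeg K F).toNat + 1, fun ⟨_, hx⟩ ↦ Nat.not_succ_le_self _ <|
      card_le_toNat_trdeg hx.algebraicIndependent⟩
  exact ⟨ρ, not_not.1 hρ, not_exists.1 hmax⟩

theorem exists_resTrdegEq [FinTrdeg K F] (O : ValuationSubring F) : ∃ τ, ResTrdegEq O K τ := by
  obtain ⟨τ, hτ, hmax⟩ := Nat.exists_not_and_succ_of_not_zero_of_exists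
    (p := fun n ↦ ¬ ∃ y : Fin n → F, ResIndep O K y)
    (not_not.2 ⟨Fin.elim0, resIndep_of_isEmpty _⟩)
    ⟨(Algebra.trdeg K F).toNat + 1, fun ⟨_, hy⟩ ↦ Nat.not_succ_le_self _ <|
      card_le_toNat_trdeg hy.algebraicIndependent⟩
  exact ⟨τ, not_not.1 hτ, not_exists.1 hmax⟩

theorem exists_isSeparatingTranscendenceBasis
    (hfg : ∃ S : Finset F, IntermediateField.adjoin K (S : Set F) = ⊤) (hsep : IsSeparableExt K ⊤) :
    ∃ (d : ℕ) (u : Fin d → F), IsSeparatingTranscendenceBasis K u := by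
  obtain ⟨S, hS⟩ := hfg
  obtain ⟨d, u, -, hu, hsep⟩ := hsep S (Set.subset_univ _)
  refine ⟨d, u, hu, ⟨fun x ↦ hsep x ?_⟩⟩
  have hx : x ∈ IntermediateField.adjoin K (S : Set F) := hS ▸ IntermediateField.mem_top
  rwa [← IntermediateField.mem_toSubfield, IntermediateField.adjoin_toSubfield,
    show Set.range (algebraMap K F) = K from Subtype.range_coe] at hx

end ValuedFunctionField

end LocalUnif

open LocalUnif in
theorem statement_18_general
    (F : Type*) [Field F] (K : Subfield F) (O : ValuationSubring F) {n : ℕ} {t : Fin n → F}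
    (ht : IsSeparatingTranscendenceBasis K t) :
    ∃ (d : ℕ) (u : Fin d → F), AlgebraicIndependent K u ∧
      (∀ x : F, IsSeparable (IntermediateField.adjoin K (Set.range u)) x) ∧
      ∃ (ρ τ : ℕ) (σ : Fin ρ → Fin d) (θ : Fin τ → Fin d),
        Function.Injective σ ∧ Function.Injective θ ∧ (∀ i j, σ i ≠ θ j) ∧
        ValIndepMod O K (u ∘ σ) ∧ (∀ x' : Fin (ρ + 1) → F, ¬ ValIndepMod O K x') ∧
        ResIndep O K (u ∘ θ) ∧ (∀ y' : Fin (τ + 1) → F, ¬ ResIndep O K y') := by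
  have : FinTrdeg K F := .of_isTranscendenceBasis ht.isTranscendenceBasis
  obtain ⟨ρ, ⟨x, hx⟩, hρ⟩ := exists_ratRankEq (K := K) O
  obtain ⟨τ, ⟨y, hy⟩, hτ⟩ := exists_resTrdegEq (K := K) O
  obtain ⟨u, hu, g, hgx, hgy⟩ := ht.exists_valIndepMod_resIndep hx hy
  exact ⟨n, u, hu.algebraicIndependent, hu.isSeparable.isSeparable, ρ, τ, g ∘ Sum.inl, g ∘ Sum.inr,
    g.injective.comp Sum.inl_injective, g.injective.comp Sum.inr_injective,
    fun _ _ ↦ g.injective.ne Sum.inl_ne_inr, hgx, hρ, hgy, hτ⟩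

open LocalUnif in
/-- Lemma 2.12 of the paper. Let `(F|K, P)` be a valued function
field (the valuation not necessarily trivial on `K`) with `F|K` separable. Then
there is a separating transcendence basis `u` of `F|K` containing elements
`x₁,…,x_ρ` (given by an injection `σ`) whose values form a maximal set of elements
of `v_P F` rationally independent modulo `v_P K`, and elements `y₁,…,y_τ` (given by
an injection `θ`, disjoint from `σ`) whose residues form a transcendence basis of
`FP` over `KP`. -/
theorem statement_18
    (F : Type*) [Field F] (K : Subfield F) (O : ValuationSubring F)
    (hfg : ∃ S : Finset F, IntermediateField.adjoin ↥K (S : Set F) = ⊤)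
    (htr : ∃ x : F, Transcendental ↥K x)
    (hsep : IsSeparableExt K ⊤) :
    ∃ (d : ℕ) (u : Fin d → F),
      -- `u` is a separating transcendence basis of `F|K`
      AlgebraicIndependent ↥K u ∧
      (∀ x : F, IsSeparable ↥(IntermediateField.adjoin ↥K (Set.range u)) x) ∧
      ∃ (ρ τ : ℕ) (σ : Fin ρ → Fin d) (θ : Fin τ → Fin d),
        Function.Injective σ ∧ Function.Injective θ ∧ (∀ i j, σ i ≠ θ j) ∧
        -- the values of the `u (σ i)` are a maximal rationally independent set
        -- modulo `v_P K`
        ValIndepMod O K (u ∘ σ) ∧ (∀ x' : Fin (ρ + 1) → F, ¬ ValIndepMod O K x') ∧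
        -- the residues of the `u (θ i)` form a transcendence basis of `FP|KP`
        ResIndep O K (u ∘ θ) ∧ (∀ y' : Fin (τ + 1) → F, ¬ ResIndep O K y') := by
  obtain ⟨_, _, hu⟩ := exists_isSeparatingTranscendenceBasis hfg hsep
  exact statement_18_general F K O hu
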